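/- arXiv:1101.5107 — 2 statements merged into one kernel-verified Lean document; each statement's English description precedes it below -/
import Mathlib

section
/- Let R be a ring. If Q_l(R) is a left Artinian ring, then the set C_R of regular elements of R is a left Ore set, S₀(R) = C_R, and Q_l(R) = Q_cl(R), the classical left quotient ring of R. -/
/-! Since `S₀(R)` consists of regular elements, `f : R → Q` is injective. For a regular `c`,
clearing denominators shows that right multiplication by `f c` is injective on `Q`; it is an
endomorphism of an Artinian left module, hence bijective, so `f c` is a unit
(`isUnit_of_mul_eq_zero`). Writing `f r * (f c)⁻¹` as a left fraction with denominator in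
`S₀(R) ⊆ C_R` gives the left Ore condition for `C_R`. Then `C_R` is itself a left denominator set
with `ass = 0`, so it is contained in `S₀(R)`, and the two sets agree. -/

/-! Basic notions from the paper "The largest left quotient ring of a ring"
(V. V. Bavula): multiplicative sets, left Ore sets, left denominator sets,
`ass S`, and an abstract characterization of the left Ore localization. -/

universe u

namespace BavulaLQR

variable {R : Type*}

/-- A multiplicative set: contains `1`, does not contain `0`, closed under `*`. -/
def IsMulSet [Ring R] (S : Set R) : Prop :=
  (1 : R) ∈ S ∧ (0 : R) ∉ S ∧ ∀ s ∈ S, ∀ t ∈ S, s * t ∈ S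

/-- A left Ore set: a multiplicative set satisfying the left Ore condition. -/
def IsLeftOre [Ring R] (S : Set R) : Prop :=
  IsMulSet S ∧ ∀ (r : R), ∀ s ∈ S, ∃ r' : R, ∃ s' ∈ S, s' * r = r' * s

/-- `ass S = {r | s * r = 0 for some s ∈ S}`. -/
def assSet [Ring R] (S : Set R) : Set R := {r : R | ∃ s ∈ S, s * r = 0}

/-- The right-sided analogue of `assSet`. -/
def assRSet [Ring R] (S : Set R) : Set R := {r : R | ∃ s ∈ S, r * s = 0}

/-- A left denominator set. -/
def IsLeftDen [Ring R] (S : Set R) : Prop :=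
  IsLeftOre S ∧ ∀ (r : R), ∀ s ∈ S, r * s = 0 → ∃ t ∈ S, t * r = 0

/-- A right Ore set. -/
def IsRightOre [Ring R] (S : Set R) : Prop :=
  IsMulSet S ∧ ∀ (r : R), ∀ s ∈ S, ∃ r' : R, ∃ s' ∈ S, r * s' = s * r'

/-- A right denominator set. -/
def IsRightDen [Ring R] (S : Set R) : Prop :=
  IsRightOre S ∧ ∀ (r : R), ∀ s ∈ S, s * r = 0 → ∃ t ∈ S, r * t = 0

/-- `f : R →+* Q` is a left localization of `R` at `S`: every `f s` is a unit,
every element of `Q` is of the form `(f s)⁻¹ * f r`, and `ker f = ass S`. -/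
def IsLeftLocalization [Ring R] (S : Set R) {Q : Type*} [Ring Q] (f : R →+* Q) : Prop :=
  (∀ s ∈ S, IsUnit (f s)) ∧
  (∀ q : Q, ∃ s ∈ S, ∃ r : R, f s * q = f r) ∧
  (∀ r : R, f r = 0 ↔ r ∈ assSet S)

/-- `f : R →+* Q` is a right localization of `R` at `S`. -/
def IsRightLocalization [Ring R] (S : Set R) {Q : Type*} [Ring Q] (f : R →+* Q) : Prop :=
  (∀ s ∈ S, IsUnit (f s)) ∧
  (∀ q : Q, ∃ s ∈ S, ∃ r : R, q * f s = f r) ∧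
  (∀ r : R, f r = 0 ↔ r ∈ assRSet S)

/-- `S_a(R)`: the union of all left denominator sets `S` with `ass S = a`. -/
def largestLeftDen [Ring R] (a : Set R) : Set R :=
  {x : R | ∃ S : Set R, (IsLeftDen S ∧ assSet S = a) ∧ x ∈ S}

/-- `S₀(R)`, the largest left denominator set with `ass = 0`. -/
def S0 (R : Type*) [Ring R] : Set R := largestLeftDen ({0} : Set R)

end BavulaLQR

namespace BavulaLQR

/-- The set `C_R` of regular elements: neither left nor right zero divisors. -/
def regSet (R : Type*) [Ring R] : Set R :=
  {r : R | (∀ x : R, r * x = 0 → x = 0) ∧ (∀ x : R, x * r = 0 → x = 0)}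

/-- Elements of left denominator sets with `ass = 0` are regular. -/
theorem S0_subset_regSet (R : Type*) [Ring R] : S0 R ⊆ regSet R := by
  rintro c ⟨S, ⟨⟨-, hden⟩, hass⟩, hc⟩
  have key : ∀ x : R, ∀ t ∈ S, t * x = 0 → x = 0 := fun x t ht h => by
    have hx : x ∈ assSet S := ⟨t, ht, h⟩
    rw [hass] at hx
    exact hx
  refine ⟨fun x h => key x c hc h, fun x h => ?_⟩
  obtain ⟨t, ht, h'⟩ := hden x c hc h
  exact key x t ht h'

theorem assSet_regSet_eq_zero {R : Type*} [Ring R] : assSet (regSet R) = {0} := by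
  ext r
  constructor
  · rintro ⟨s, hs, h⟩
    exact hs.1 r h
  · rintro rfl
    exact ⟨1, ⟨by simp, by simp⟩, by simp⟩

theorem regSet_isMulSet (R : Type*) [Ring R] [Nontrivial R] : IsMulSet (regSet R) := by
  refine ⟨⟨by simp, by simp⟩, fun h => one_ne_zero (h.1 1 (by simp)), ?_⟩
  intro s hs t ht
  refine ⟨fun x h => ht.1 x (hs.1 _ ?_), fun x h => hs.2 x (ht.2 _ ?_)⟩
  · rwa [← mul_assoc]
  · rwa [mul_assoc]

/-- Right multiplication by `a` is an endomorphism of the left module `Q`; if it is injective,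
it is bijective by the descending chain condition, so `a` has a left inverse, which is two-sided
because `a` can be cancelled on the right. -/
theorem isUnit_of_mul_eq_zero {Q : Type*} [Ring Q] [IsArtinianRing Q] (a : Q)
    (ha : ∀ q : Q, q * a = 0 → q = 0) : IsUnit a := by
  have hinj : Function.Injective (LinearMap.toSpanSingleton Q Q a) := by
    rw [injective_iff_map_eq_zero]
    intro q hq
    exact ha q (by simpa using hq)
  obtain ⟨q, hq⟩ := IsArtinian.surjective_of_injective_endomorphism _ hinj 1
  have hqa : q * a = 1 := by simpa using hq
  have haq : a * q = 1 := by
    rw [← sub_eq_zero]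
    apply ha
    rw [sub_mul, mul_assoc, hqa, mul_one, one_mul, sub_self]
  exact ⟨⟨a, q, haq, hqa⟩, rfl⟩

/-- Corollary 2.11. Let `f : R →+* Q` be the localization of `R`
at `S₀(R)`, i.e. `Q = Q_l(R)`. If `Q_l(R)` is left Artinian, then `C_R` is a left
Ore set, `S₀(R) = C_R`, and `Q_l(R) = Q_cl(R)` (i.e. `f` is also the localization
of `R` at `C_R`). -/
theorem artinian_largest_quotient_is_classical {R : Type u} [Ring R] (Q : Type u) [Ring Q]
    (f : R →+* Q) (hf : IsLeftLocalization (S0 R) f) (hArt : IsArtinianRing Q) :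
    IsLeftOre (regSet R) ∧ S0 R = regSet R ∧ IsLeftLocalization (regSet R) f := by
  obtain ⟨hS_unit, hfrac, hker⟩ := hf
  have hS := S0_subset_regSet R
  have hker0 : ∀ r : R, f r = 0 → r = 0 := fun r h => by
    obtain ⟨s, hs, h'⟩ := (hker r).1 h
    exact (hS hs).1 r h'
  have hinj : Function.Injective f := (injective_iff_map_eq_zero f).2 hker0
  -- A fraction exists, so `S0 R` is nonempty; this excludes the zero ring, where `S0 R = ∅`.
  have : Nontrivial R := by
    obtain ⟨s, ⟨S, ⟨⟨⟨hmul, -⟩, -⟩, -⟩, -⟩, -⟩ := hfrac 0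
    exact ⟨1, 0, fun h => hmul.2.1 (h ▸ hmul.1)⟩
  have hunit : ∀ c ∈ regSet R, IsUnit (f c) := by
    intro c hc
    refine isUnit_of_mul_eq_zero _ fun q hq => ?_
    obtain ⟨s, hs, r, hr⟩ := hfrac q
    have hrc : r * c = 0 := hker0 _ (by rw [map_mul, ← hr, mul_assoc, hq, mul_zero])
    have hsq : f s * q = 0 := by rw [hr, hc.2 r hrc, map_zero]
    exact (hS_unit s hs).mul_right_eq_zero.1 hsq
  have hore : IsLeftOre (regSet R) := by
    refine ⟨regSet_isMulSet R, fun r c hc => ?_⟩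
    -- Write the right fraction `f r * (f c)⁻¹` as a left fraction and clear denominators.
    obtain ⟨u, hu⟩ := hunit c hc
    obtain ⟨s, hs, r', h⟩ := hfrac (f r * ↑u⁻¹)
    refine ⟨r', s, hS hs, hinj ?_⟩
    rw [map_mul, map_mul, ← h, ← hu, mul_assoc, mul_assoc, Units.inv_mul, mul_one]
  have heq : S0 R = regSet R :=
    hS.antisymm fun c hc => ⟨regSet R, ⟨⟨hore, fun r s hs h =>
      ⟨s, hs, by rw [hs.2 r h, mul_zero]⟩⟩, assSet_regSet_eq_zero⟩, hc⟩
  exact ⟨hore, heq, heq ▸ ⟨hS_unit, hfrac, hker⟩⟩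

end BavulaLQR
end

section
/- Let R be a ring, a ∈ Ass_l(R), and π: R → R/a the quotient map. Then π⁻¹(S₀(R/a)) = S_a(R), π(S_a(R)) = S₀(R/a), and Q_a(R) := S_a(R)⁻¹R is isomorphic to Q_l(R/a) = S₀(R/a)⁻¹(R/a). -/
/-!
Everything follows from the correspondence between left denominator sets of `R` with `ass = a`
and left denominator sets of `R/a` with `ass = 0`. Images go from the first kind to the second
(`isLeftDen_image`), which gives `S_a(R) ⊆ π⁻¹(S₀(R/a))`. Going back, the Ore condition in `R/a`
lifts to `R` only up to elements of `a`; these are killed by a fixed `S` with `ass S = a`, so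
a preimage is a left denominator set once it contains `S` (`isLeftDen_preimage`). The set
`S₀(R/a)` contains `π(S)` and is itself a left denominator set (`isLeftDen_S0`): its elements are
regular, and the Ore condition passes to products, so that the monoid it generates is again one
of the sets in the union. Hence `π⁻¹(S₀(R/a)) = S_a(R)`, and surjectivity of `π` gives the image.

For the localizations, composing `R/a → Q_l(R/a)` with `π` yields a left localization of `R` at
`π⁻¹(S₀(R/a)) = S_a(R)` (`isLeftLocalization_comp`), and left localizations at a left denominator
set are unique because each is isomorphic to Mathlib's `OreLocalization`
(`exists_equiv_of_isLeftLocalization`).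
-/

/-! Basic notions from the paper "The largest left quotient ring of a ring"
(V. V. Bavula): multiplicative sets, left Ore sets, left denominator sets,
`ass S`, and an abstract characterization of the left Ore localization. -/

universe u

namespace BavulaLQR

/-- The image in `R/a` of a left denominator set `S` with `ass S = a` consists of regular
elements (`ass = 0`) and is a left denominator set. -/
lemma isLeftDen_image {R R' : Type*} [Ring R] [Ring R'] {π : R →+* R'}
    (hsurj : Function.Surjective π) {S : Set R} (hS : IsLeftDen S)
    (hker : ∀ r : R, π r = 0 ↔ r ∈ assSet S) :
    IsLeftDen (π '' S) ∧ assSet (π '' S) = {0} := by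
  obtain ⟨⟨⟨h1, h0, hmul⟩, hore⟩, hrev⟩ := hS
  refine ⟨⟨⟨⟨⟨1, h1, map_one π⟩, ?_, ?_⟩, ?_⟩, ?_⟩, ?_⟩
  · rintro ⟨t, ht, h⟩
    obtain ⟨s, hs, hst⟩ := (hker t).1 h
    exact h0 (hst ▸ hmul s hs t ht)
  · rintro _ ⟨s, hs, rfl⟩ _ ⟨t, ht, rfl⟩
    exact ⟨s * t, hmul s hs t ht, map_mul π s t⟩
  · rintro x _ ⟨s, hs, rfl⟩
    obtain ⟨r, rfl⟩ := hsurj x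
    obtain ⟨r', s', hs', h⟩ := hore r s hs
    exact ⟨π r', π s', ⟨s', hs', rfl⟩, by rw [← map_mul, h, map_mul]⟩
  · rintro x _ ⟨s, hs, rfl⟩ h
    obtain ⟨r, rfl⟩ := hsurj x
    obtain ⟨u, hu, hur⟩ := (hker (r * s)).1 (by rw [map_mul, h])
    obtain ⟨t, ht, htr⟩ := hrev (u * r) s hs (by rw [mul_assoc, hur])
    refine ⟨1, ⟨1, h1, map_one π⟩, ?_⟩
    rw [one_mul, hker]
    exact ⟨t * u, hmul t ht u hu, by rw [mul_assoc, htr]⟩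
  · ext x
    constructor
    · rintro ⟨_, ⟨s, hs, rfl⟩, h⟩
      obtain ⟨r, rfl⟩ := hsurj x
      obtain ⟨u, hu, hur⟩ := (hker (s * r)).1 (by rw [map_mul, h])
      exact (hker r).2 ⟨u * s, hmul u hu s hs, by rw [mul_assoc, hur]⟩
    · rintro rfl
      exact ⟨1, ⟨1, h1, map_one π⟩, mul_zero 1⟩

lemma S0_mul_left_cancel {R : Type*} [Ring R] {s r : R} (hs : s ∈ S0 R) (h : s * r = 0) :
    r = 0 := by
  obtain ⟨S, ⟨-, hass⟩, hsS⟩ := hs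
  have : r ∈ assSet S := ⟨s, hsS, h⟩
  rwa [hass] at this

lemma S0_mul_right_cancel {R : Type*} [Ring R] {s r : R} (hs : s ∈ S0 R) (h : r * s = 0) :
    r = 0 := by
  obtain ⟨S, ⟨hden, hass⟩, hsS⟩ := hs
  have : r ∈ assSet S := hden.2 r s hsS h
  rwa [hass] at this

/-- The union `S₀(R)` is itself a left denominator set: the multiplicative closure of this union
is a left denominator set with `ass = 0`, hence is contained in the union. -/
lemma isLeftDen_S0 {R : Type*} [Ring R] (hne : ∃ S : Set R, IsLeftDen S ∧ assSet S = {0}) :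
    IsLeftDen (S0 R) ∧ assSet (S0 R) = {0} := by
  have hntriv : (1 : R) ≠ 0 := by
    obtain ⟨S, hS, -⟩ := hne
    intro h
    exact hS.1.1.2.1 (h ▸ hS.1.1.1)
  set M : Submonoid R := Submonoid.closure (S0 R) with hM
  have hleft : ∀ s ∈ M, ∀ r : R, s * r = 0 → r = 0 := by
    intro s hs
    induction hs using Submonoid.closure_induction with
    | mem x hx => exact fun r h => S0_mul_left_cancel hx h
    | one => simp
    | mul x y _ _ ihx ihy => exact fun r h => ihy r (ihx _ (by rw [← mul_assoc, h]))
  have hright : ∀ s ∈ M, ∀ r : R, r * s = 0 → r = 0 := by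
    intro s hs
    induction hs using Submonoid.closure_induction with
    | mem x hx => exact fun r h => S0_mul_right_cancel hx h
    | one => simp
    | mul x y _ _ ihx ihy => exact fun r h => ihx r (ihy _ (by rw [mul_assoc, h]))
  -- The Ore condition passes from factors to products: clear `y` first, then `x`.
  have hore : ∀ s ∈ M, ∀ r : R, ∃ r' : R, ∃ s' ∈ M, s' * r = r' * s := by
    intro s hs
    induction hs using Submonoid.closure_induction with
    | mem x hx =>
      intro r
      have hx' := hx
      obtain ⟨S, hS, hxS⟩ := hx'
      obtain ⟨r', s', hs', h⟩ := hS.1.1.2 r x hxS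
      exact ⟨r', s', Submonoid.subset_closure ⟨S, hS, hs'⟩, h⟩
    | one => exact fun r => ⟨r, 1, M.one_mem, by rw [one_mul, mul_one]⟩
    | mul x y _ _ ihx ihy =>
      intro r
      obtain ⟨r₁, s₁, hs₁, h₁⟩ := ihy r
      obtain ⟨r₂, s₂, hs₂, h₂⟩ := ihx r₁
      exact ⟨r₂, s₂ * s₁, M.mul_mem hs₂ hs₁, by rw [mul_assoc, h₁, ← mul_assoc, h₂, mul_assoc]⟩
  have hden : IsLeftDen (M : Set R) ∧ assSet (M : Set R) = {0} := by
    refine ⟨⟨⟨⟨M.one_mem, ?_, fun s hs t ht => M.mul_mem hs ht⟩, fun r s hs => hore s hs r⟩, ?_⟩, ?_⟩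
    · exact fun h => hntriv (hleft 0 h 1 (zero_mul 1))
    · exact fun r s hs h => ⟨1, M.one_mem, by rw [one_mul, hright s hs r h]⟩
    · ext r
      constructor
      · rintro ⟨s, hs, h⟩
        exact hleft s hs r h
      · rintro rfl
        exact ⟨1, M.one_mem, mul_zero 1⟩
  have heq : S0 R = (M : Set R) :=
    Set.Subset.antisymm Submonoid.subset_closure fun x hx => ⟨M, hden, hx⟩
  rwa [heq]

/-- If a left denominator set `T` of `R/a` with `ass T = 0` contains the image of some
`S` with `ass S = a`, then the preimage of `T` is a left denominator set with `ass = a`.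
Multiplying by elements of `S` lifts identities from `R/a` to `R`. -/
lemma isLeftDen_preimage {R R' : Type*} [Ring R] [Ring R'] {π : R →+* R'}
    (hsurj : Function.Surjective π) {S : Set R}
    (hker : ∀ r : R, π r = 0 ↔ r ∈ assSet S) {T : Set R'} (hT : IsLeftDen T)
    (hassT : assSet T = {0}) (hST : S ⊆ π ⁻¹' T) :
    IsLeftDen (π ⁻¹' T) ∧ assSet (π ⁻¹' T) = assSet S := by
  obtain ⟨⟨⟨h1, h0, hmul⟩, hore⟩, hrev⟩ := hT
  have hmul' : ∀ s ∈ π ⁻¹' T, ∀ t ∈ π ⁻¹' T, s * t ∈ π ⁻¹' T := by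
    intro s hs t ht
    rw [Set.mem_preimage, map_mul]
    exact hmul _ hs _ ht
  refine ⟨⟨⟨⟨by rwa [Set.mem_preimage, map_one], by rwa [Set.mem_preimage, map_zero], hmul'⟩, ?_⟩,
    ?_⟩, ?_⟩
  · intro r s hs
    obtain ⟨x, y, hy, h⟩ := hore (π r) (π s) hs
    obtain ⟨r', rfl⟩ := hsurj x
    obtain ⟨s', rfl⟩ := hsurj y
    obtain ⟨u, hu, hur⟩ := (hker (s' * r - r' * s)).1 (by simp [h])
    refine ⟨u * r', u * s', hmul' u (hST hu) s' hy, ?_⟩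
    rw [mul_sub, sub_eq_zero] at hur
    rw [mul_assoc, mul_assoc, hur]
  · intro r s hs h
    have hr : π r ∈ assSet T := hrev (π r) (π s) hs (by rw [← map_mul, h, map_zero])
    rw [hassT] at hr
    obtain ⟨u, hu, hur⟩ := (hker r).1 hr
    exact ⟨u, hST hu, hur⟩
  · ext r
    constructor
    · rintro ⟨s, hs, h⟩
      have hr : π r ∈ assSet T := ⟨π s, hs, by rw [← map_mul, h, map_zero]⟩
      rw [hassT] at hr
      exact (hker r).1 hr
    · rintro ⟨u, hu, hur⟩
      exact ⟨u, hST hu, hur⟩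

/-- Any left localization in the sense of `IsLeftLocalization` is isomorphic, compatibly with the
maps from `R`, to Mathlib's Ore localization. -/
lemma exists_equiv_oreLocalization {R Q : Type*} [Ring R] [Ring Q] (M : Submonoid R)
    [OreLocalization.OreSet M] {f : R →+* Q} (hf : IsLeftLocalization (M : Set R) f) :
    ∃ e : OreLocalization M R ≃+* Q, ∀ r, e (OreLocalization.numeratorRingHom r) = f r := by
  obtain ⟨hunit, hfrac, hker⟩ := hf
  let fS : M →* Qˣ := IsUnit.liftRight ((f : R →* Q).comp M.subtype) fun s => hunit s s.2
  have hfS : ∀ s : M, f s = fS s := fun s =>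
    (IsUnit.coe_liftRight ((f : R →* Q).comp M.subtype) (fun s => hunit s s.2) s).symm
  let g := OreLocalization.universalHom f fS hfS
  have hinj : Function.Injective g := by
    rw [injective_iff_map_eq_zero]
    intro x hx
    induction x using OreLocalization.ind with
    | _ r s =>
    change g _ = 0 at hx
    rw [OreLocalization.universalHom_apply, Units.mul_right_eq_zero] at hx
    obtain ⟨t, ht, htr⟩ := (hker r).1 hx
    rw [OreLocalization.expand' r s ⟨t, ht⟩, Submonoid.smul_def, smul_eq_mul, htr,
      OreLocalization.zero_oreDiv]
  have hsurj : Function.Surjective g := by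
    intro q
    obtain ⟨s, hs, r, h⟩ := hfrac q
    refine ⟨OreLocalization.oreDiv r ⟨s, hs⟩, ?_⟩
    rw [OreLocalization.universalHom_apply, ← h, Units.inv_mul_eq_iff_eq_mul, ← hfS]
  exact ⟨RingEquiv.ofBijective g ⟨hinj, hsurj⟩,
    fun r => OreLocalization.universalHom_commutes f fS hfS⟩

/-- Uniqueness of the left localization at a left denominator set. -/
lemma exists_equiv_of_isLeftLocalization {R Q₁ Q₂ : Type*} [Ring R] [Ring Q₁] [Ring Q₂]
    {S : Set R} (hS : IsLeftDen S) {f₁ : R →+* Q₁} {f₂ : R →+* Q₂}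
    (h₁ : IsLeftLocalization S f₁) (h₂ : IsLeftLocalization S f₂) :
    ∃ e : Q₁ ≃+* Q₂, (e : Q₁ →+* Q₂).comp f₁ = f₂ := by
  obtain ⟨⟨⟨hS1, -, hmul⟩, hore⟩, hrev⟩ := hS
  let M : Submonoid R :=
    { carrier := S, one_mem' := hS1, mul_mem' := fun {a b} ha hb => hmul a ha b hb }
  choose num den hden heq using fun (r : R) (s : M) => hore r s s.2
  let _ : OreLocalization.OreSet M :=
    { ore_right_cancel := by
        intro r₁ r₂ s h
        obtain ⟨t, ht, h'⟩ := hrev (r₁ - r₂) s s.2 (by rw [sub_mul, h, sub_self])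
        exact ⟨⟨t, ht⟩, by rwa [mul_sub, sub_eq_zero] at h'⟩
      oreNum := num
      oreDenom := fun r s => ⟨den r s, hden r s⟩
      ore_eq := heq }
  obtain ⟨e₁, he₁⟩ := exists_equiv_oreLocalization M (f := f₁) h₁
  obtain ⟨e₂, he₂⟩ := exists_equiv_oreLocalization M (f := f₂) h₂
  refine ⟨e₁.symm.trans e₂, RingHom.ext fun r => ?_⟩
  simp [← he₁, ← he₂]

/-- A left localization of `R/a` at `T`, where `ass T = 0`, composed with `π` is a left
localization of `R` at the preimage of `T`, provided that preimage has `ass = a`. -/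
lemma isLeftLocalization_comp {R R' Q : Type*} [Ring R] [Ring R'] [Ring Q] {π : R →+* R'}
    (hsurj : Function.Surjective π) {T : Set R'} (hassT : assSet T = {0})
    (hker : ∀ r : R, π r = 0 ↔ r ∈ assSet (π ⁻¹' T)) {f : R' →+* Q}
    (hf : IsLeftLocalization T f) : IsLeftLocalization (π ⁻¹' T) (f.comp π) := by
  obtain ⟨hunit, hfrac, hkerf⟩ := hf
  refine ⟨fun s hs => hunit _ hs, fun q => ?_, fun r => ?_⟩
  · obtain ⟨x, hx, y, h⟩ := hfrac q
    obtain ⟨s, rfl⟩ := hsurj x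
    obtain ⟨r, rfl⟩ := hsurj y
    exact ⟨s, hx, r, h⟩
  · rw [RingHom.comp_apply, hkerf, hassT, Set.mem_singleton_iff, hker]

/-- Lemma 3.4.(2). Let `a ∈ Ass_l(R)` and `π : R → R/a` the
quotient map (a surjective ring homomorphism with kernel `a`). Then
`π⁻¹(S₀(R/a)) = S_a(R)`, `π(S_a(R)) = S₀(R/a)`, and `Q_a(R) = S_a(R)⁻¹R` is
isomorphic to `Q_l(R/a) = S₀(R/a)⁻¹(R/a)`. -/
theorem largest_denominator_set_mod_ass {R : Type u} [Ring R] (a : Set R)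
    (ha : ∃ S : Set R, IsLeftDen S ∧ assSet S = a)
    (R' : Type u) [Ring R'] (π : R →+* R') (hsurj : Function.Surjective π)
    (hker : ∀ r : R, π r = 0 ↔ r ∈ a) :
    π ⁻¹' (S0 R') = largestLeftDen a ∧
    π '' (largestLeftDen a) = S0 R' ∧
    ∀ (Q₁ : Type u) [Ring Q₁] (f₁ : R →+* Q₁),
      IsLeftLocalization (largestLeftDen a) f₁ →
      ∀ (Q₂ : Type u) [Ring Q₂] (f₂ : R' →+* Q₂), IsLeftLocalization (S0 R') f₂ →
        ∃ e : Q₁ ≃+* Q₂, (e : Q₁ →+* Q₂).comp f₁ = f₂.comp π := by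
  obtain ⟨S, hS, rfl⟩ := ha
  have himg := isLeftDen_image hsurj hS hker
  obtain ⟨hT, hassT⟩ := isLeftDen_S0 ⟨_, himg⟩
  have hpre := isLeftDen_preimage hsurj hker hT hassT
    fun s hs => ⟨π '' S, himg, s, hs, rfl⟩
  have heq : π ⁻¹' (S0 R') = largestLeftDen (assSet S) := by
    refine Set.Subset.antisymm (fun x hx => ⟨_, hpre, hx⟩) ?_
    rintro x ⟨U, ⟨hU, hassU⟩, hxU⟩
    exact ⟨π '' U, isLeftDen_image hsurj hU (by rwa [hassU]), x, hxU, rfl⟩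
  refine ⟨heq, by rw [← heq, Set.image_preimage_eq _ hsurj], ?_⟩
  intro Q₁ _ f₁ h₁ Q₂ _ f₂ h₂
  rw [← heq] at h₁
  exact exists_equiv_of_isLeftLocalization hpre.1 h₁
    (isLeftLocalization_comp hsurj hassT (by rwa [hpre.2]) h₂)

end BavulaLQR
end
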